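/- Let q be a prime power and let ν, m₁, m₂, t be positive integers with m₁ ≥ m₂ ≥ t+1 and 2ν ≥ 2m₁ + m₂ + t + 2. If m₂ > 2t, or (m₁,m₂,t) ∈ {(2,2,1), (3,2,1)}, then c₁(ν,m₁,m₂,t) > c₂(ν,m₁,m₂,t). -/

import Mathlib

open Finset Module

noncomputable section

/-- Gaussian binomial coefficient `[n choose k]_q` as a rational number. -/
def gaussBinom (q n k : ℕ) : ℚ :=
  ∏ i ∈ Finset.range k, ((q : ℚ) ^ ((n : ℤ) - i) - 1) / ((q : ℚ) ^ ((k : ℤ) - i) - 1)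

/-- `N'(a; m; 2ν)`, the number of `m`-dim totally isotropic subspaces containing
a fixed `a`-dim one. -/
def Nprime (q a m ν : ℕ) : ℚ :=
  ∏ i ∈ Finset.Icc 1 (m - a), ((q : ℚ) ^ (2 * ((ν : ℤ) - m + i)) - 1) / ((q : ℚ) ^ (i : ℤ) - 1)

variable {K V : Type*} [Field K] [AddCommGroup V] [Module K V]

/-- A subspace is totally isotropic w.r.t. the bilinear form `f`. -/
def TotallyIsotropic (f : V →ₗ[K] V →ₗ[K] K) (W : Submodule K V) : Prop :=
  ∀ x ∈ W, ∀ y ∈ W, f x y = 0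

/-- `polar f m` = `𝒫_m`, the set of `m`-dimensional totally isotropic subspaces. -/
def polar (f : V →ₗ[K] V →ₗ[K] K) (m : ℕ) : Set (Submodule K V) :=
  {W | TotallyIsotropic f W ∧ finrank K W = m}

/-- `X` is a `t`-cover of the family `ℱ`. -/
def IsTCover (f : V →ₗ[K] V →ₗ[K] K) (t : ℕ) (ℱ : Set (Submodule K V))
    (X : Submodule K V) : Prop :=
  TotallyIsotropic f X ∧ ∀ F ∈ ℱ, t ≤ finrank K ↥(X ⊓ F)

/-- `τ_t(ℱ)`, the minimum dimension of a `t`-cover of `ℱ`. -/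
def tauCover (f : V →ₗ[K] V →ₗ[K] K) (t : ℕ) (ℱ : Set (Submodule K V)) : ℕ :=
  sInf {x | ∃ X, IsTCover f t ℱ X ∧ finrank K ↥X = x}

def C1 (f : V →ₗ[K] V →ₗ[K] K) (M T : Submodule K V) (m t : ℕ) : Set (Submodule K V) :=
  {F | F ∈ polar f m ∧ T ≤ F ∧ t + 1 ≤ finrank K ↥(F ⊓ M)}

def C2 (f : V →ₗ[K] V →ₗ[K] K) (M T : Submodule K V) (m : ℕ) : Set (Submodule K V) :=
  {F | F ∈ polar f m ∧ T ≤ F} ∪ {F | F ∈ polar f m ∧ F ≤ M}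

def C3 (f : V →ₗ[K] V →ₗ[K] K) (S : Submodule K V) (m : ℕ) : Set (Submodule K V) :=
  {F | F ∈ polar f m ∧ S ≤ F}

def C4 (f : V →ₗ[K] V →ₗ[K] K) (S : Submodule K V) (m t : ℕ) : Set (Submodule K V) :=
  {F | F ∈ polar f m ∧ t ≤ finrank K ↥(F ⊓ S)}

def s0 (q ν m s t : ℕ) : ℚ :=
  gaussBinom q (s - t) 1 * Nprime q (t + 1) m ν - q * gaussBinom q (s - t) 2 * Nprime q (t + 2) m ν

/-!
Write `q` for the order of the field and `N a m` for the number of `m`-dimensional totally isotropic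
subspaces through a fixed `a`-dimensional one. Extending that subspace by one vector of its
orthogonal complement at a time gives a product formula for `N`. Hence `|C3 S| = N (t + 1) m₁`, and
covering `C4` by the subspaces through one of the `q ^ t + ⋯ + q + 1` hyperplanes of `S` gives
`(q - 1) |C4 S| ≤ (q ^ (t + 1) - 1) * N t m₂`.

For `F` through `T` put `x = q ^ (dim (F ⊓ M) - dim T)`, which is `1` or at least `q`. The sums over
`F` of `x - 1` and of `(x - 1) (x - q)` are evaluated by double counting, and since
`(x - q) (x - q ^ 2) ≥ 0` a combination of them bounds `|C1 M T|` from below. This second-moment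
bound beats `(q ^ (t + 1) - 1) / (q - 1) * N (t + 1) m₁` as soon as `2 * t < m₂`, while
`|C2 M T| ≥ N t m₂`. In the two sporadic cases the first factor may lose slightly, and the `q ^ 2`
hyperplanes of `M` that miss `T`, which also belong to `C2`, make up for it.
-/

open scoped LinearAlgebra.Projectivization

section Hyperplanes

theorem exists_le_finrank_eq {W : Submodule K V} {n : ℕ}
    (hn : n ≤ finrank K W) : ∃ H ≤ W, finrank K H = n := by
  obtain ⟨v, hv⟩ := exists_linearIndependent_of_le_finrank hn
  refine ⟨(Submodule.span K (Set.range v)).map W.subtype, Submodule.map_subtype_le _ _, ?_⟩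
  rw [Submodule.finrank_map_subtype_eq, finrank_span_eq_card hv, Fintype.card_fin]

/-- The hyperplane of `V` killed by a point of the projective space of `T.dualAnnihilator`, i.e. by
a functional vanishing on `T` that is determined up to a scalar. -/
def hyperplaneOfPoint (T : Submodule K V) (p : ℙ K T.dualAnnihilator) : Submodule K V :=
  (p.submodule.map T.dualAnnihilator.subtype).dualCoannihilator

theorem hyperplaneOfPoint_injective [FiniteDimensional K V] (T : Submodule K V) :
    Function.Injective (hyperplaneOfPoint T) := fun _ _ h ↦
  Projectivization.submodule_injective <|
    Submodule.map_injective_of_injective T.dualAnnihilator.injective_subtype <|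
      Subspace.orderIsoFiniteDimensional.symm.injective h

theorem range_hyperplaneOfPoint [FiniteDimensional K V] (T : Submodule K V) :
    Set.range (hyperplaneOfPoint T) = {H | T ≤ H ∧ finrank K H + 1 = finrank K V} := by
  ext H
  constructor
  · rintro ⟨p, rfl⟩
    have hle : p.submodule.map T.dualAnnihilator.subtype ≤ T.dualAnnihilator :=
      Submodule.map_subtype_le _ _
    refine ⟨Submodule.le_dualAnnihilator_iff_le_dualCoannihilator.1 hle, ?_⟩
    have hdim := Subspace.finrank_add_finrank_dualCoannihilator_eq
      (p.submodule.map T.dualAnnihilator.subtype)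
    rwa [Submodule.finrank_map_subtype_eq, p.finrank_submodule, add_comm] at hdim
  · rintro ⟨hTH, hH⟩
    have hline : finrank K (H.dualAnnihilator.submoduleOf T.dualAnnihilator) = 1 := by
      have hdim := Subspace.finrank_add_finrank_dualAnnihilator_eq H
      rw [(Submodule.submoduleOfEquivOfLe (Submodule.dualAnnihilator_anti hTH)).finrank_eq]
      lia
    refine ⟨Projectivization.mk'' _ hline, ?_⟩
    rw [hyperplaneOfPoint, Projectivization.submodule_mk'', Submodule.submoduleOf,
      Submodule.map_comap_subtype, inf_eq_right.2 (Submodule.dualAnnihilator_anti hTH)]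
    exact Subspace.dualAnnihilator_dualCoannihilator_eq

theorem ncard_hyperplanes_ge [Finite K] [FiniteDimensional K V] (T : Submodule K V) :
    {H : Submodule K V | T ≤ H ∧ finrank K H + 1 = finrank K V}.ncard =
      ∑ i ∈ range (finrank K V - finrank K T), Nat.card K ^ i := by
  have hdim : finrank K T.dualAnnihilator = finrank K V - finrank K T := by
    have := Subspace.finrank_add_finrank_dualAnnihilator_eq T
    lia
  rw [← range_hyperplaneOfPoint, Set.ncard_range_of_injective (hyperplaneOfPoint_injective T),
    Projectivization.card_of_finrank K _ hdim]

theorem ncard_hyperplanes_between [Finite K] [FiniteDimensional K V] {T M : Submodule K V}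
    (hTM : T ≤ M) :
    {H : Submodule K V | T ≤ H ∧ H ≤ M ∧ finrank K H + 1 = finrank K M}.ncard =
      ∑ i ∈ range (finrank K M - finrank K T), Nat.card K ^ i := by
  have himage : {H : Submodule K V | T ≤ H ∧ H ≤ M ∧ finrank K H + 1 = finrank K M} =
      Submodule.map M.subtype '' {H | T.submoduleOf M ≤ H ∧ finrank K H + 1 = finrank K M} := by
    ext H
    constructor
    · rintro ⟨hTH, hHM, hH⟩
      refine ⟨H.submoduleOf M, ⟨Submodule.comap_mono hTH, ?_⟩, ?_⟩
      · rwa [(Submodule.submoduleOfEquivOfLe hHM).finrank_eq]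
      · rw [Submodule.submoduleOf, Submodule.map_comap_subtype, inf_eq_right.2 hHM]
    · rintro ⟨H, ⟨hTH, hH⟩, rfl⟩
      refine ⟨?_, Submodule.map_subtype_le _ _, ?_⟩
      · simpa [Submodule.submoduleOf, Submodule.map_comap_subtype, hTM] using
          Submodule.map_mono (f := M.subtype) hTH
      · rwa [Submodule.finrank_map_subtype_eq]
  rw [himage, Set.ncard_image_of_injective _
    (Submodule.map_injective_of_injective M.injective_subtype), ncard_hyperplanes_ge,
    (Submodule.submoduleOfEquivOfLe hTM).finrank_eq]

end Hyperplanes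

section TotallyIsotropic

variable {f : V →ₗ[K] V →ₗ[K] K} {A M : Submodule K V}

theorem TotallyIsotropic.mono (hM : TotallyIsotropic f M) (hAM : A ≤ M) : TotallyIsotropic f A :=
  fun x hx y hy ↦ hM x (hAM hx) y (hAM hy)

theorem TotallyIsotropic.le_orthogonal_of_le (hM : TotallyIsotropic f M) (hAM : A ≤ M) :
    M ≤ LinearMap.BilinForm.orthogonal f A :=
  fun v hv x hx ↦ hM x (hAM hx) v hv

theorem TotallyIsotropic.sup_span_singleton (halt : f.IsAlt) (hA : TotallyIsotropic f A) {v : V}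
    (hv : v ∈ LinearMap.BilinForm.orthogonal f A) : TotallyIsotropic f (A ⊔ K ∙ v) := by
  intro x hx y hy
  obtain ⟨a, ha, _, hx', rfl⟩ := Submodule.mem_sup.1 hx
  obtain ⟨b, hb, _, hy', rfl⟩ := Submodule.mem_sup.1 hy
  obtain ⟨c, rfl⟩ := Submodule.mem_span_singleton.1 hx'
  obtain ⟨d, rfl⟩ := Submodule.mem_span_singleton.1 hy'
  have hav : f a v = 0 := hv a ha
  have hvb : f v b = 0 := halt.isRefl b v (hv b hb)
  simp [halt v, hA a ha b hb, hav, hvb]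

theorem sup_span_singleton_mem_polar [FiniteDimensional K V] (halt : f.IsAlt) {a : ℕ}
    (hA : A ∈ polar f a) {v : V} (hv : v ∈ LinearMap.BilinForm.orthogonal f A) (hvA : v ∉ A) :
    A ⊔ K ∙ v ∈ polar f (a + 1) :=
  ⟨hA.1.sup_span_singleton halt hv, by rw [Submodule.finrank_sup_span_singleton hvA, hA.2]⟩

theorem TotallyIsotropic.two_mul_finrank_le [FiniteDimensional K V] (hnd : f.Nondegenerate)
    (hM : TotallyIsotropic f M) : 2 * finrank K M ≤ finrank K V := by
  have hle := Submodule.finrank_mono (hM.le_orthogonal_of_le le_rfl)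
  have hM' := M.finrank_le
  rw [LinearMap.BilinForm.finrank_orthogonal hnd] at hle
  lia

theorem C3_eq_empty_of_lt [FiniteDimensional K V] {m : ℕ} (h : m < finrank K A) :
    C3 f A m = ∅ := by
  refine Set.eq_empty_iff_forall_notMem.2 fun F ⟨⟨_, hF⟩, hAF⟩ ↦ ?_
  have := Submodule.finrank_mono hAF
  lia

theorem C3_eq_singleton [FiniteDimensional K V] {m : ℕ} (hA : A ∈ polar f m) :
    C3 f A m = {A} := by
  ext F
  constructor
  · rintro ⟨⟨_, hF⟩, hAF⟩
    exact (Submodule.eq_of_le_of_finrank_eq hAF (hA.2.trans hF.symm)).symm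
  · rintro rfl
    exact ⟨hA, le_rfl⟩

end TotallyIsotropic

section IsotropicCount

/-- The number of `m`-dimensional totally isotropic subspaces containing a given `a`-dimensional one
in a symplectic space of dimension `n` over the field with `q` elements. The subtraction `n - i` is
exact in the relevant range `i < m ≤ n / 2`, and the value is `0` when `m < a`. -/
def isotropicCount (q : ℚ) (n a m : ℕ) : ℚ :=
  if m < a then 0 else ∏ i ∈ Ico a m, (q ^ (n - i) - q ^ i) / (q ^ m - q ^ i)

variable {q : ℚ} {n a m : ℕ}

theorem isotropicCount_self (q : ℚ) (n m : ℕ) : isotropicCount q n m m = 1 := by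
  simp [isotropicCount]

theorem isotropicCount_of_lt (q : ℚ) (n : ℕ) (h : m < a) : isotropicCount q n a m = 0 := by
  simp [isotropicCount, h]

theorem sub_mul_isotropicCount (hq : 1 < q) (n : ℕ) (h : a < m) :
    (q ^ m - q ^ a) * isotropicCount q n a m =
      (q ^ (n - a) - q ^ a) * isotropicCount q n (a + 1) m := by
  have hne : q ^ m - q ^ a ≠ 0 := (sub_pos.2 (pow_lt_pow_right₀ hq h)).ne'
  rw [isotropicCount, isotropicCount, if_neg (by lia), if_neg (by lia),
    prod_eq_prod_Ico_succ_bot h]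
  field_simp

theorem isotropicCount_pos (hq : 1 < q) (h : a ≤ m) (hn : 2 * m ≤ n) :
    0 < isotropicCount q n a m := by
  rw [isotropicCount, if_neg (by lia)]
  refine prod_pos fun i hi ↦ ?_
  rw [mem_Ico] at hi
  exact div_pos (sub_pos.2 (pow_lt_pow_right₀ hq (by lia)))
    (sub_pos.2 (pow_lt_pow_right₀ hq hi.2))

theorem isotropicCount_nonneg (hq : 1 < q) (hn : 2 * m ≤ n) : 0 ≤ isotropicCount q n a m := by
  rcases lt_or_ge m a with h | h
  · rw [isotropicCount_of_lt q n h]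
  · exact (isotropicCount_pos hq h hn).le

theorem pow_mul_isotropicCount_succ_le (hq : 1 < q) {s : ℕ} (hn : 2 * m ≤ n)
    (hs : s + m + a ≤ n) : q ^ s * isotropicCount q n (a + 1) m ≤ isotropicCount q n a m := by
  rcases lt_or_ge a m with ham | hma
  · have hstep : (q ^ m - q ^ a) * q ^ s ≤ q ^ (n - a) - q ^ a := by
      have hms : q ^ (m + s) ≤ q ^ (n - a) := pow_le_pow_right₀ hq.le (by lia)
      have has : q ^ a ≤ q ^ (a + s) := pow_le_pow_right₀ hq.le (by lia)
      rw [sub_mul, ← pow_add, ← pow_add]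
      linarith
    refine le_of_mul_le_mul_left ?_ (sub_pos.2 (pow_lt_pow_right₀ hq ham))
    rw [sub_mul_isotropicCount hq n ham, ← mul_assoc]
    exact mul_le_mul_of_nonneg_right hstep (isotropicCount_nonneg hq hn)
  · rw [isotropicCount_of_lt q n (by lia : m < a + 1), mul_zero]
    exact isotropicCount_nonneg hq hn

theorem isotropicCount_one_two (hq : 1 < q) (hn : 3 ≤ n) :
    isotropicCount q n 1 2 = q ^ 2 * isotropicCount q n 2 3 + q + 1 := by
  have hq0 : q ≠ 0 := (zero_lt_one.trans hq).ne'
  have hq1 : q - 1 ≠ 0 := (sub_pos.2 hq).ne'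
  obtain ⟨k, rfl⟩ := Nat.exists_eq_add_of_le hn
  have hone := sub_mul_isotropicCount (a := 1) (m := 1 + 1) hq (3 + k) one_lt_two
  have htwo := sub_mul_isotropicCount hq (3 + k) (by lia : 2 < 3)
  rw [isotropicCount_self, mul_one, show 3 + k - 1 = k + 2 by lia] at hone
  rw [isotropicCount_self, mul_one, show 3 + k - 2 = k + 1 by lia] at htwo
  refine mul_left_cancel₀ (mul_ne_zero hq0 hq1) ?_
  linear_combination hone - q * htwo

theorem sq_add_self_add_one_le_isotropicCount_two_three (hq : 1 < q) (hn : 7 ≤ n) :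
    q ^ 2 + q + 1 ≤ isotropicCount q n 2 3 := by
  have hcount := sub_mul_isotropicCount hq n (by lia : 2 < 3)
  have hpow : q ^ 5 ≤ q ^ (n - 2) := pow_le_pow_right₀ hq.le (by lia)
  rw [isotropicCount_self, mul_one] at hcount
  refine le_of_mul_le_mul_left ?_ (sub_pos.2 (pow_lt_pow_right₀ hq (by lia : 2 < 3)))
  linear_combination hpow - hcount

end IsotropicCount

section DoubleCounting

variable [Finite V] {f : V →ₗ[K] V →ₗ[K] K} {A U M : Submodule K V} {a m : ℕ}

/-- The family `C3 f A m` as a finset, to index sums over it. -/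
def C3Finset (f : V →ₗ[K] V →ₗ[K] K) (A : Submodule K V) (m : ℕ) : Finset (Submodule K V) :=
  (C3 f A m).toFinite.toFinset

theorem mem_C3Finset {F : Submodule K V} : F ∈ C3Finset f A m ↔ F ∈ C3 f A m :=
  Set.Finite.mem_toFinset _

theorem card_C3Finset : #(C3Finset f A m) = (C3 f A m).ncard :=
  (Set.ncard_eq_toFinset_card _).symm

theorem ncard_sdiff_eq_pow_sub_pow (hAU : A ≤ U) :
    ((U \ A : Set V).ncard : ℚ) =
      (Nat.card K : ℚ) ^ finrank K U - (Nat.card K : ℚ) ^ finrank K A := by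
  have hcard (W : Submodule K V) : (W : Set V).ncard = Nat.card K ^ finrank K W :=
    (Nat.card_coe_set_eq _).symm.trans (Module.natCard_eq_pow_finrank (K := K) (V := W))
  have hadd := Set.ncard_sdiff_add_ncard_of_subset (SetLike.coe_subset_coe.2 hAU)
  rw [hcard, hcard] at hadd
  rw [eq_sub_iff_add_eq]
  exact_mod_cast hadd

-- Counts the pairs `(v, F)` with `v ∈ (F ⊓ U) \ A` in two ways, weighting each by `h F`.
theorem sum_C3Finset_pow_sub_pow_mul (hAU : A ≤ U) {h : Submodule K V → ℚ} {c : ℚ}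
    (hc : ∀ v ∈ U, v ∉ A → ∑ F ∈ C3Finset f (A ⊔ K ∙ v) m, h F = c) :
    ∑ F ∈ C3Finset f A m,
        ((Nat.card K : ℚ) ^ finrank K ↥(F ⊓ U) - (Nat.card K : ℚ) ^ finrank K A) * h F =
      ((Nat.card K : ℚ) ^ finrank K U - (Nat.card K : ℚ) ^ finrank K A) * c := by
  let diff (W : Submodule K V) : Finset V := (W \ A : Set V).toFinite.toFinset
  have mem_diff {W : Submodule K V} {v : V} : v ∈ diff W ↔ v ∈ W ∧ v ∉ A := by simp [diff]
  have card_diff {W : Submodule K V} (hAW : A ≤ W) : (#(diff W) : ℚ) =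
      (Nat.card K : ℚ) ^ finrank K W - (Nat.card K : ℚ) ^ finrank K A := by
    rw [← ncard_sdiff_eq_pow_sub_pow hAW, Set.ncard_eq_toFinset_card]
  calc
    _ = ∑ F ∈ C3Finset f A m, ∑ _v ∈ diff (F ⊓ U), h F := by
      refine sum_congr rfl fun F hF ↦ ?_
      rw [sum_const, nsmul_eq_mul, card_diff (le_inf (mem_C3Finset.1 hF).2 hAU)]
    _ = ∑ v ∈ diff U, ∑ F ∈ C3Finset f (A ⊔ K ∙ v) m, h F := by
      refine sum_comm' fun F v ↦ ?_
      simp only [mem_diff, mem_C3Finset, C3, Set.mem_ofPred_eq, Submodule.mem_inf, sup_le_iff,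
        Submodule.span_singleton_le_iff_mem]
      tauto
    _ = ∑ _v ∈ diff U, c :=
      sum_congr rfl fun v hv ↦ hc v (mem_diff.1 hv).1 (mem_diff.1 hv).2
    _ = _ := by rw [sum_const, nsmul_eq_mul, card_diff hAU]

variable [Finite K]

theorem one_lt_cast_natCard (K : Type*) [Nontrivial K] [Finite K] : 1 < (Nat.card K : ℚ) :=
  mod_cast Finite.one_lt_card

theorem two_le_cast_natCard (K : Type*) [Nontrivial K] [Finite K] : 2 ≤ (Nat.card K : ℚ) :=
  mod_cast Finite.one_lt_card (α := K)

theorem ncard_C3 {A : Submodule K V} {a : ℕ} (halt : f.IsAlt) (hnd : f.Nondegenerate)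
    (hA : A ∈ polar f a) :
    ((C3 f A m).ncard : ℚ) = isotropicCount (Nat.card K) (finrank K V) a m := by
  rcases lt_trichotomy m a with hma | rfl | ham
  · rw [isotropicCount_of_lt _ _ hma, C3_eq_empty_of_lt (hA.2 ▸ hma), Set.ncard_empty,
      Nat.cast_zero]
  · rw [isotropicCount_self, C3_eq_singleton hA, Set.ncard_singleton, Nat.cast_one]
  · have hq := one_lt_cast_natCard K
    set U := LinearMap.BilinForm.orthogonal f A
    have hAU : A ≤ U := hA.1.le_orthogonal_of_le le_rfl
    have hU : finrank K U = finrank K V - a := by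
      rw [LinearMap.BilinForm.finrank_orthogonal hnd, hA.2]
    have hcount := sum_C3Finset_pow_sub_pow_mul (f := f) (m := m) hAU (h := 1) fun v hvU hvA ↦ by
      rw [Pi.one_def, sum_const, nsmul_one, card_C3Finset,
        ncard_C3 halt hnd (sup_span_singleton_mem_polar halt hA hvU hvA)]
    have hinf {F : Submodule K V} (hF : F ∈ C3Finset f A m) : finrank K ↥(F ⊓ U) = m := by
      obtain ⟨⟨hF, hFm⟩, hAF⟩ := mem_C3Finset.1 hF
      rw [inf_eq_left.2 (hF.le_orthogonal_of_le hAF), hFm]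
    rw [sum_congr rfl fun F hF ↦ by rw [hinf hF], ← mul_sum, Pi.one_def, sum_const, nsmul_one,
      card_C3Finset, hU, hA.2, ← sub_mul_isotropicCount hq _ ham] at hcount
    exact mul_left_cancel₀ (sub_pos.2 (pow_lt_pow_right₀ hq ham)).ne' hcount
termination_by m - a

theorem sum_C3Finset_pow_sub_pow (halt : f.IsAlt) (hnd : f.Nondegenerate)
    (hM : TotallyIsotropic f M) (hAM : A ≤ M) (hA : finrank K A = a) :
    ∑ F ∈ C3Finset f A m, ((Nat.card K : ℚ) ^ finrank K ↥(F ⊓ M) - (Nat.card K : ℚ) ^ a) =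
      ((Nat.card K : ℚ) ^ finrank K M - (Nat.card K : ℚ) ^ a) *
        isotropicCount (Nat.card K) (finrank K V) (a + 1) m := by
  have hcount := sum_C3Finset_pow_sub_pow_mul (f := f) (m := m) hAM (h := 1) fun v hvM hvA ↦ by
    rw [Pi.one_def, sum_const, nsmul_one, card_C3Finset, ncard_C3 halt hnd
      (sup_span_singleton_mem_polar halt ⟨hM.mono hAM, hA⟩ (hM.le_orthogonal_of_le hAM hvM) hvA)]
  simpa only [hA, Pi.one_apply, mul_one] using hcount

theorem sum_C3Finset_pow_sub_pow_mul_pow_sub_pow (halt : f.IsAlt) (hnd : f.Nondegenerate)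
    (hM : TotallyIsotropic f M) (hAM : A ≤ M) (hA : finrank K A = a) :
    ∑ F ∈ C3Finset f A m, ((Nat.card K : ℚ) ^ finrank K ↥(F ⊓ M) - (Nat.card K : ℚ) ^ a) *
        ((Nat.card K : ℚ) ^ finrank K ↥(F ⊓ M) - (Nat.card K : ℚ) ^ (a + 1)) =
      ((Nat.card K : ℚ) ^ finrank K M - (Nat.card K : ℚ) ^ a) *
        (((Nat.card K : ℚ) ^ finrank K M - (Nat.card K : ℚ) ^ (a + 1)) *
          isotropicCount (Nat.card K) (finrank K V) (a + 2) m) := by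
  have hcount := sum_C3Finset_pow_sub_pow_mul (f := f) (m := m) hAM fun v hvM hvA ↦
    sum_C3Finset_pow_sub_pow halt hnd hM
      (sup_le hAM ((Submodule.span_singleton_le_iff_mem v M).2 hvM))
      ((Submodule.finrank_sup_span_singleton hvA).trans (congrArg (· + 1) hA))
  simpa only [hA] using hcount

end DoubleCounting

section FamilySizes

variable [Finite V] [Finite K] {f : V →ₗ[K] V →ₗ[K] K} {M T S : Submodule K V} {m t s : ℕ}

-- The difference of the two sides is `(q ^ d - q) * (q ^ d - q ^ 2)` when `d ≠ 0`.
theorem pow_sub_one_mul_le_indicator {q : ℚ} (hq : 1 < q) (d : ℕ) :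
    (q ^ 2 - 1) * (q ^ d - 1) - (q ^ d - 1) * (q ^ d - q) ≤
      if 1 ≤ d then (q ^ 2 - 1) * (q - 1) else 0 := by
  rcases d with _ | _ | d
  · simp
  · simp
  · rw [if_pos (by lia)]
    have hd : q ^ 2 ≤ q ^ (d + 2) := pow_le_pow_right₀ hq.le (by lia)
    have hq2 : q ≤ q ^ 2 := le_self_pow₀ hq.le two_ne_zero
    nlinarith [mul_nonneg (sub_nonneg.2 (hq2.trans hd)) (sub_nonneg.2 hd)]

theorem le_ncard_C1 (halt : f.IsAlt) (hnd : f.Nondegenerate) (hM : M ∈ polar f (t + s))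
    (hTM : T ≤ M) (hT : finrank K T = t) :
    ((Nat.card K : ℚ) ^ 2 - 1) * ((Nat.card K : ℚ) ^ s - 1) *
          isotropicCount (Nat.card K) (finrank K V) (t + 1) m -
        ((Nat.card K : ℚ) ^ s - 1) * ((Nat.card K : ℚ) ^ s - Nat.card K) *
          isotropicCount (Nat.card K) (finrank K V) (t + 2) m ≤
      ((Nat.card K : ℚ) ^ 2 - 1) * (Nat.card K - 1) * (C1 f M T m t).ncard := by
  have hq := one_lt_cast_natCard K
  have hfirst := sum_C3Finset_pow_sub_pow (m := m) halt hnd hM.1 hTM hT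
  have hsecond := sum_C3Finset_pow_sub_pow_mul_pow_sub_pow (m := m) halt hnd hM.1 hTM hT
  rw [hM.2] at hfirst hsecond
  set q := (Nat.card K : ℚ)
  have hC1 : ((C1 f M T m t).ncard : ℚ) =
      #{F ∈ C3Finset f T m | t + 1 ≤ finrank K ↥(F ⊓ M)} := by
    rw [← Set.ncard_coe_finset]
    congr 2
    ext F
    simp [C1, C3, mem_C3Finset, and_assoc]
  have hpoint (F : Submodule K V) (hF : F ∈ C3Finset f T m) :
      q ^ t * (q ^ 2 - 1) * (q ^ finrank K ↥(F ⊓ M) - q ^ t) -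
          (q ^ finrank K ↥(F ⊓ M) - q ^ t) * (q ^ finrank K ↥(F ⊓ M) - q ^ (t + 1)) ≤
        q ^ (2 * t) *
          if t + 1 ≤ finrank K ↥(F ⊓ M) then (q ^ 2 - 1) * (q - 1) else 0 := by
    obtain ⟨d, hd⟩ := Nat.exists_eq_add_of_le
      (hT ▸ Submodule.finrank_mono (le_inf (mem_C3Finset.1 hF).2 hTM))
    simp only [hd, Nat.add_le_add_iff_left]
    calc
      _ = q ^ (2 * t) * ((q ^ 2 - 1) * (q ^ d - 1) - (q ^ d - 1) * (q ^ d - q)) := by ring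
      _ ≤ _ := by gcongr; exact pow_sub_one_mul_le_indicator hq d
  have hsum := sum_le_sum hpoint
  rw [sum_sub_distrib, ← mul_sum, ← mul_sum, hfirst, hsecond, ← sum_filter, sum_const,
    nsmul_eq_mul, ← hC1] at hsum
  refine le_of_mul_le_mul_left ?_ (by positivity : 0 < q ^ (2 * t))
  linear_combination hsum

theorem le_ncard_C1_of_mem_polar_add_two (halt : f.IsAlt) (hnd : f.Nondegenerate)
    (hM : M ∈ polar f (t + 2)) (hTM : T ≤ M) (hT : finrank K T = t) :
    (Nat.card K + 1) * isotropicCount (Nat.card K) (finrank K V) (t + 1) m -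
      Nat.card K * isotropicCount (Nat.card K) (finrank K V) (t + 2) m ≤
        (C1 f M T m t).ncard := by
  have hq := one_lt_cast_natCard K
  have hle := le_ncard_C1 (m := m) halt hnd hM hTM hT
  have hpos : 0 < ((Nat.card K : ℚ) ^ 2 - 1) * (Nat.card K - 1) :=
    mul_pos (sub_pos.2 (one_lt_pow₀ hq two_ne_zero)) (sub_pos.2 hq)
  refine le_of_mul_le_mul_left ?_ hpos
  linear_combination hle

theorem ncard_C2 (hM : M ∈ polar f (m + 1)) (hTM : T ≤ M) (hT : finrank K T = t) :
    (C2 f M T m).ncard =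
      (C3 f T m).ncard + ∑ i ∈ Ico (m + 1 - t) (m + 1), Nat.card K ^ i := by
  let above (W : Submodule K V) : Set (Submodule K V) :=
    {H | W ≤ H ∧ H ≤ M ∧ finrank K H + 1 = finrank K M}
  have hC2 : C2 f M T m = C3 f T m ∪ (above ⊥ \ above T) := by
    ext F
    have hiso : F ≤ M → TotallyIsotropic f F := hM.1.mono
    simp only [C2, C3, polar, above, hM.2, Set.mem_union, Set.mem_sdiff, Set.mem_ofPred_eq,
      bot_le, true_and, Nat.add_right_cancel_iff]
    tauto
  have hdisj : Disjoint (C3 f T m) (above ⊥ \ above T) :=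
    Set.disjoint_left.2 fun F hF hF' ↦ hF'.2 ⟨hF.2, hF'.1.2⟩
  have hsub : above T ⊆ above ⊥ := fun H hH ↦ ⟨bot_le, hH.2⟩
  have hcard := Set.ncard_sdiff_add_ncard_of_subset hsub
  rw [ncard_hyperplanes_between hTM, ncard_hyperplanes_between bot_le, finrank_bot, hM.2, hT,
    Nat.sub_zero, ← sum_range_add_sum_Ico _ (Nat.sub_le (m + 1) t), add_comm,
    Nat.add_left_cancel_iff] at hcard
  rw [hC2, Set.ncard_union_eq hdisj, hcard]

theorem ncard_C4_le (halt : f.IsAlt) (hnd : f.Nondegenerate) (hS : S ∈ polar f (t + 1)) :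
    ((C4 f S m t).ncard : ℚ) ≤
      (∑ i ∈ range (t + 1), (Nat.card K : ℚ) ^ i) *
        isotropicCount (Nat.card K) (finrank K V) t m := by
  let hyperplanes : Set (Submodule K V) := {H | ⊥ ≤ H ∧ H ≤ S ∧ finrank K H + 1 = finrank K S}
  let hyperplaneFinset : Finset (Submodule K V) := hyperplanes.toFinite.toFinset
  have hcard : #hyperplaneFinset = ∑ i ∈ range (t + 1), Nat.card K ^ i := by
    rw [← Set.ncard_eq_toFinset_card, ncard_hyperplanes_between bot_le, hS.2, finrank_bot,
      Nat.sub_zero]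
  have hsub : C4 f S m t ⊆ ⋃ H ∈ hyperplaneFinset, C3 f H m := by
    rintro F ⟨hF, hFS⟩
    obtain ⟨H, hH, hHt⟩ := exists_le_finrank_eq hFS
    have hmem : H ∈ hyperplaneFinset :=
      (Set.Finite.mem_toFinset _).2 ⟨bot_le, hH.trans inf_le_right, by rw [hHt, hS.2]⟩
    exact Set.mem_biUnion hmem ⟨hF, hH.trans inf_le_left⟩
  have hC3 (H : Submodule K V) (hH : H ∈ hyperplaneFinset) :
      ((C3 f H m).ncard : ℚ) = isotropicCount (Nat.card K) (finrank K V) t m := by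
    obtain ⟨-, hHS, hHt⟩ := (Set.Finite.mem_toFinset _).1 hH
    exact ncard_C3 halt hnd ⟨hS.1.mono hHS, by have := hS.2; lia⟩
  calc
    ((C4 f S m t).ncard : ℚ) ≤ ∑ H ∈ hyperplaneFinset, ((C3 f H m).ncard : ℚ) := mod_cast
      (Set.ncard_le_ncard hsub).trans (hyperplaneFinset.set_ncard_biUnion_le _)
    _ = _ := by rw [sum_congr rfl hC3, sum_const, nsmul_eq_mul, hcard]; push_cast; rfl

end FamilySizes

section Comparison

variable [Finite V] [Finite K] {f : V →ₗ[K] V →ₗ[K] K} {M T S : Submodule K V} {m m₁ m₂ t s : ℕ}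

theorem pow_sub_one_mul_isotropicCount_lt_ncard_C1 (halt : f.IsAlt) (hnd : f.Nondegenerate)
    (hM : M ∈ polar f (t + s)) (hTM : T ≤ M) (hT : finrank K T = t) (hts : t + 2 ≤ s)
    (htm : t + 1 ≤ m) (hm : 2 * m ≤ finrank K V) (hms : m + (t + s) + 1 ≤ finrank K V) :
    ((Nat.card K : ℚ) ^ (t + 1) - 1) * isotropicCount (Nat.card K) (finrank K V) (t + 1) m <
      (Nat.card K - 1) * (C1 f M T m t).ncard := by
  have hq := one_lt_cast_natCard K
  have hq2 := two_le_cast_natCard K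
  have hC1 := le_ncard_C1 (m := m) halt hnd hM hTM hT
  have hA := isotropicCount_pos hq htm hm
  have hB := isotropicCount_nonneg (a := t + 2) hq hm
  have hBA := pow_mul_isotropicCount_succ_le (a := t + 1) (s := s) hq hm (by lia)
  set q := (Nat.card K : ℚ)
  set A := isotropicCount q (finrank K V) (t + 1) m
  set B := isotropicCount q (finrank K V) (t + 2) m
  have hYX : q * q ^ (t + 1) ≤ q ^ s := by
    rw [← pow_succ']
    exact pow_le_pow_right₀ hq.le hts
  have hqX : q ≤ q ^ s := le_self_pow₀ hq.le (by lia)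
  have hsecond : (q ^ s - 1) * (q ^ s - q) * B ≤ q ^ s * A := by
    calc
      _ ≤ q ^ s * q ^ s * B := by gcongr <;> linarith
      _ ≤ q ^ s * A := by rw [mul_assoc]; gcongr
  have hgap : q ^ s < (q ^ 2 - 1) * (q ^ s - q ^ (t + 1)) := by
    have hsq : 3 ≤ q ^ 2 - 1 := by nlinarith
    have hY : 2 * q ^ (t + 1) ≤ q ^ s := (by gcongr : _ ≤ q * q ^ (t + 1)).trans hYX
    calc
      q ^ s < 3 * (q ^ s - q ^ (t + 1)) := by linarith
      _ ≤ (q ^ 2 - 1) * (q ^ s - q ^ (t + 1)) := by gcongr; linarith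
  have hpos : 0 < q ^ 2 - 1 := sub_pos.2 (one_lt_pow₀ hq two_ne_zero)
  refine lt_of_mul_lt_mul_left ?_ hpos.le
  linear_combination hC1 + hsecond + A * hgap

theorem ncard_mul_lt_of_two_mul_lt (halt : f.IsAlt) (hnd : f.Nondegenerate)
    (htm₁ : t + 1 ≤ m₁) (hm₁ : 2 * m₁ ≤ finrank K V) (hm : m₁ + m₂ + 2 ≤ finrank K V)
    (htm₂ : 2 * t < m₂) (hM : M ∈ polar f (m₂ + 1)) (hTM : T ≤ M) (hT : finrank K T = t)
    (hS : S ∈ polar f (t + 1)) :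
    (C3 f S m₁).ncard * (C4 f S m₂ t).ncard < (C1 f M T m₁ t).ncard * (C2 f M T m₂).ncard := by
  have hq := one_lt_cast_natCard K
  have hm₂ : 2 * m₂ ≤ finrank K V := by
    have := hM.1.two_mul_finrank_le hnd
    have := hM.2
    lia
  have hC1 : ((Nat.card K : ℚ) ^ (t + 1) - 1) * (C3 f S m₁).ncard <
      (Nat.card K - 1) * (C1 f M T m₁ t).ncard := by
    obtain ⟨s, hs⟩ := Nat.exists_eq_add_of_le (by lia : t ≤ m₂ + 1)
    rw [ncard_C3 halt hnd hS]
    exact pow_sub_one_mul_isotropicCount_lt_ncard_C1 halt hnd (hs ▸ hM) hTM hT (by lia) htm₁ hm₁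
      (by lia)
  have hC4 : (Nat.card K - 1) * ((C4 f S m₂ t).ncard : ℚ) ≤
      ((Nat.card K : ℚ) ^ (t + 1) - 1) * (C3 f T m₂).ncard := by
    rw [ncard_C3 halt hnd ⟨hM.1.mono hTM, hT⟩, ← mul_geom_sum, mul_assoc]
    gcongr
    exact ncard_C4_le halt hnd hS
  have hC3 : 0 < ((C3 f T m₂).ncard : ℚ) := by
    rw [ncard_C3 halt hnd ⟨hM.1.mono hTM, hT⟩]
    exact isotropicCount_pos hq (by lia) hm₂
  have hC2 : ((C3 f T m₂).ncard : ℚ) ≤ (C2 f M T m₂).ncard :=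
    mod_cast (ncard_C2 hM hTM hT).symm ▸ Nat.le_add_right _ _
  have hmain : ((C3 f S m₁).ncard : ℚ) * (C4 f S m₂ t).ncard <
      (C1 f M T m₁ t).ncard * (C2 f M T m₂).ncard := by
    refine lt_of_mul_lt_mul_left ?_ (sub_pos.2 hq).le
    calc
      _ = ((C3 f S m₁).ncard : ℚ) * ((Nat.card K - 1) * (C4 f S m₂ t).ncard) := by ring
      _ ≤ (C3 f S m₁).ncard * (((Nat.card K : ℚ) ^ (t + 1) - 1) * (C3 f T m₂).ncard) := by gcongr
      _ = ((Nat.card K : ℚ) ^ (t + 1) - 1) * (C3 f S m₁).ncard * (C3 f T m₂).ncard := by ring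
      _ < (Nat.card K - 1) * (C1 f M T m₁ t).ncard * (C3 f T m₂).ncard := by gcongr
      _ ≤ (Nat.card K - 1) * (C1 f M T m₁ t).ncard * (C2 f M T m₂).ncard := by gcongr
      _ = _ := mul_assoc _ _ _
  exact_mod_cast hmain

theorem ncard_C2_two (halt : f.IsAlt) (hnd : f.Nondegenerate) (hM : M ∈ polar f 3) (hTM : T ≤ M)
    (hT : finrank K T = 1) :
    ((C2 f M T 2).ncard : ℚ) =
      isotropicCount (Nat.card K) (finrank K V) 1 2 + (Nat.card K : ℚ) ^ 2 := by
  rw [ncard_C2 hM hTM hT, Nat.cast_add, ncard_C3 halt hnd ⟨hM.1.mono hTM, hT⟩]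
  simp

theorem ncard_C4_two_one_le (halt : f.IsAlt) (hnd : f.Nondegenerate) (hS : S ∈ polar f 2) :
    ((C4 f S 2 1).ncard : ℚ) ≤
      (Nat.card K + 1) * isotropicCount (Nat.card K) (finrank K V) 1 2 := by
  simpa [sum_range_succ, add_comm] using ncard_C4_le (m := 2) halt hnd hS

theorem ncard_mul_lt_of_two_two_one (halt : f.IsAlt) (hnd : f.Nondegenerate)
    (hM : M ∈ polar f 3) (hTM : T ≤ M) (hT : finrank K T = 1) (hS : S ∈ polar f 2) :
    (C3 f S 2).ncard * (C4 f S 2 1).ncard < (C1 f M T 2 1).ncard * (C2 f M T 2).ncard := by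
  have hC1 : (Nat.card K : ℚ) + 1 ≤ (C1 f M T 2 1).ncard := by
    simpa [isotropicCount_self, isotropicCount_of_lt] using
      le_ncard_C1_of_mem_polar_add_two (m := 2) halt hnd hM hTM hT
  have hC4 := ncard_C4_two_one_le halt hnd hS
  have hC2 := ncard_C2_two halt hnd hM hTM hT
  have hmain : ((C4 f S 2 1).ncard : ℚ) < (C1 f M T 2 1).ncard * (C2 f M T 2).ncard := by
    calc
      _ ≤ ((Nat.card K : ℚ) + 1) * isotropicCount (Nat.card K) (finrank K V) 1 2 := hC4
      _ < (Nat.card K + 1) * (C2 f M T 2).ncard := by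
        have : 0 < (Nat.card K : ℚ) := zero_lt_one.trans (one_lt_cast_natCard K)
        rw [hC2]
        gcongr
        exact lt_add_of_pos_right _ (by positivity)
      _ ≤ _ := by gcongr
  rw [C3_eq_singleton hS, Set.ncard_singleton, one_mul]
  exact_mod_cast hmain

theorem ncard_mul_lt_of_three_two_one (halt : f.IsAlt) (hnd : f.Nondegenerate)
    (hn : 7 ≤ finrank K V) (hM : M ∈ polar f 3) (hTM : T ≤ M) (hT : finrank K T = 1)
    (hS : S ∈ polar f 2) :
    (C3 f S 3).ncard * (C4 f S 2 1).ncard < (C1 f M T 3 1).ncard * (C2 f M T 2).ncard := by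
  have hq := two_le_cast_natCard K
  have hC1 := le_ncard_C1_of_mem_polar_add_two (m := 3) halt hnd hM hTM hT
  have hC2 := ncard_C2_two halt hnd hM hTM hT
  have hC3 := ncard_C3 (m := 3) halt hnd hS
  have hC4 := ncard_C4_two_one_le halt hnd hS
  rw [isotropicCount_self, mul_one] at hC1
  rw [isotropicCount_one_two (by linarith) (by lia)] at hC2 hC4
  have hA := sq_add_self_add_one_le_isotropicCount_two_three (one_lt_cast_natCard K) hn
  set q := (Nat.card K : ℚ)
  set A := isotropicCount q (finrank K V) 2 3
  have hmain : ((C3 f S 3).ncard : ℚ) * (C4 f S 2 1).ncard <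
      (C1 f M T 3 1).ncard * (C2 f M T 2).ncard := by
    calc
      _ ≤ A * ((q + 1) * (q ^ 2 * A + q + 1)) := by
        rw [hC3]
        gcongr
        nlinarith
      _ < ((q + 1) * A - q) * (q ^ 2 * A + q + 1 + q ^ 2) := by
        have hgap : q ^ 3 + q ^ 2 + q < q ^ 2 * A := by nlinarith
        linear_combination hgap
      _ ≤ _ := by
        rw [hC2]
        gcongr
        nlinarith
  exact_mod_cast hmain

end Comparison

theorem stmt_15_general [Finite K] [FiniteDimensional K V] {f : V →ₗ[K] V →ₗ[K] K} (halt : f.IsAlt)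
    (hnd : f.Nondegenerate) {m₁ m₂ t : ℕ} (htm₁ : t + 1 ≤ m₁) (hm₁ : 2 * m₁ ≤ finrank K V)
    (hm : m₁ + m₂ + 2 ≤ finrank K V)
    (hcase : 2 * t < m₂ ∨ (m₁, m₂, t) = (2, 2, 1) ∨ (m₁, m₂, t) = (3, 2, 1))
    {M T S : Submodule K V} (hM : M ∈ polar f (m₂ + 1)) (hTM : T ≤ M) (hT : finrank K T = t)
    (hS : S ∈ polar f (t + 1)) :
    (C3 f S m₁).ncard * (C4 f S m₂ t).ncard < (C1 f M T m₁ t).ncard * (C2 f M T m₂).ncard := by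
  have : Finite V := Module.finite_of_finite K
  rcases hcase with htm₂ | h | h
  · exact ncard_mul_lt_of_two_mul_lt halt hnd htm₁ hm₁ hm htm₂ hM hTM hT hS
  · obtain ⟨rfl, rfl, rfl⟩ : m₁ = 2 ∧ m₂ = 2 ∧ t = 1 := by simpa using h
    exact ncard_mul_lt_of_two_two_one halt hnd hM hTM hT hS
  · obtain ⟨rfl, rfl, rfl⟩ : m₁ = 3 ∧ m₂ = 2 ∧ t = 1 := by simpa using h
    exact ncard_mul_lt_of_three_two_one halt hnd hm hM hTM hT hS

theorem stmt_15
    (q ν m₁ m₂ t : ℕ) (hq : IsPrimePow q)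
    {K : Type} [Field K] [Fintype K] (hK : Fintype.card K = q)
    (f : (Fin (2 * ν) → K) →ₗ[K] (Fin (2 * ν) → K) →ₗ[K] K)
    (halt : ∀ v, f v v = 0)
    (hnd : ∀ v, (∀ w, f v w = 0) → v = 0)
    (hν : 0 < ν) (ht : 0 < t) (hm : m₂ ≤ m₁) (hmt : t + 1 ≤ m₂)
    (hdim : 2 * m₁ + m₂ + t + 2 ≤ 2 * ν)
    (hcase : 2 * t < m₂ ∨ (m₁, m₂, t) = (2, 2, 1) ∨ (m₁, m₂, t) = (3, 2, 1))
    (M : Submodule K (Fin (2 * ν) → K)) (hM : M ∈ polar f (m₂ + 1))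
    (T : Submodule K (Fin (2 * ν) → K)) (hTM : T ≤ M) (hT : finrank K T = t)
    (S : Submodule K (Fin (2 * ν) → K)) (hS : S ∈ polar f (t + 1)) :
    (C3 f S m₁).ncard * (C4 f S m₂ t).ncard <
      (C1 f M T m₁ t).ncard * (C2 f M T m₂).ncard := by
  have hn : finrank K (Fin (2 * ν) → K) = 2 * ν := Module.finrank_fin_fun K
  exact stmt_15_general halt ((LinearMap.IsAlt.isRefl halt).nondegenerate_iff_separatingLeft.2 hnd)
    (by lia) (by lia) (by lia) hcase hM hTM hT hS

end
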